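/- Continuity of the minimal renormalized action: the function w_∞ : Ω → ℝ defined by w_∞(x) = inf_{φ ∈ D_0^{1,2}(1,+∞)} A_x(φ) is real-valued and continuous on Ω. -/

import Mathlib

open MeasureTheory Real Set Filter Topology
open scoped RealInnerProductSpace ENNReal

noncomputable section
namespace NBodyHJ

attribute [local instance] Classical.propDecidable

abbrev Conf (d N : ℕ) := Fin N → EuclideanSpace ℝ (Fin d)

variable {d N : ℕ}

/-- The mass inner product on the configuration space. -/
def minner (m : Fin N → ℝ) (x y : Conf d N) : ℝ := ∑ i, m i * ⟪x i, y i⟫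

/-- The mass norm on the configuration space. -/
def mnorm (m : Fin N → ℝ) (x : Conf d N) : ℝ := Real.sqrt (minner m x x)

/-- Membership in the zero-barycenter configuration space `X`. -/
def inX (m : Fin N → ℝ) (x : Conf d N) : Prop := ∑ i, m i • x i = 0

/-- Collision configurations. -/
def collision (x : Conf d N) : Prop := ∃ i j, i ≠ j ∧ x i = x j

/-- Membership in the collision-free zero-barycenter space `Ω`. -/
def inOmega (m : Fin N → ℝ) (x : Conf d N) : Prop := inX m x ∧ ¬ collision x

/-- The Newtonian potential (with junk value `0` for a colliding pair). -/
def U (m : Fin N → ℝ) (x : Conf d N) : ℝ :=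
  ∑ i : Fin N, ∑ j : Fin N, if i < j then m i * m j / ‖x i - x j‖ else 0

/-- The time interval `(t₀, T)`, where `T ∈ (t₀, +∞]` is extended-real. -/
def timeSet (t0 : ℝ) (T : EReal) : Set ℝ := {t : ℝ | t0 < t ∧ (t : EReal) < T}

/-- Membership of the pair (curve, derivative) `(φ, φ')` in `D₀^{1,2}(t₀, T)`:
`φ` starts at `0`, takes values in `X`, is the integral of `φ'` (hence locally
absolutely continuous), and `φ'` has finite `L²` mass norm on `(t₀, T)`. -/
def InD (m : Fin N → ℝ) (t0 : ℝ) (T : EReal) (φ φ' : ℝ → Conf d N) : Prop :=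
  φ t0 = 0 ∧
  (∀ t : ℝ, t0 ≤ t → (t : EReal) < T → inX m (φ t)) ∧
  (∀ t : ℝ, t0 ≤ t → (t : EReal) < T → φ t = ∫ s in Set.Ioc t0 t, φ' s) ∧
  (∀ t : ℝ, t0 ≤ t → (t : EReal) < T → IntegrableOn φ' (Set.Ioc t0 t)) ∧
  IntegrableOn (fun t => (mnorm m (φ' t)) ^ 2) (timeSet t0 T)

/-- The norm `‖φ‖_{D_T}`. -/
def Dnorm (m : Fin N → ℝ) (t0 : ℝ) (T : EReal) (φ' : ℝ → Conf d N) : ℝ :=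
  Real.sqrt (∫ t in timeSet t0 T, (mnorm m (φ' t)) ^ 2)

/-- The motion `γ(t) = φ(t) + t a + x - a` associated with `φ` in the hyperbolic case. -/
def hypCurve (a x : Conf d N) (φ : ℝ → Conf d N) (t : ℝ) : Conf d N :=
  φ t + t • a + x - a

/-- The integrand of the hyperbolic renormalized Lagrangian action. -/
def hypIntegrand (m : Fin N → ℝ) (a x : Conf d N) (φ φ' : ℝ → Conf d N) (t : ℝ) : ℝ :=
  (mnorm m (φ' t)) ^ 2 / 2 + U m (hypCurve a x φ t) - U m (t • a)

/-- The hyperbolic renormalized Lagrangian action `A_{x,[1,T]}(φ)`, with values in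
`ℝ ∪ {+∞}` : it equals the integral of the renormalized Lagrangian if this integrand is
integrable and the motion is a.e. collision-free, and `+∞` otherwise. -/
def hypAction (m : Fin N → ℝ) (a x : Conf d N) (T : EReal) (φ φ' : ℝ → Conf d N) : EReal :=
  if IntegrableOn (hypIntegrand m a x φ φ') (timeSet 1 T) ∧
      (∀ᵐ t ∂volume.restrict (timeSet 1 T), ¬ collision (hypCurve a x φ t))
  then ((∫ t in timeSet 1 T, hypIntegrand m a x φ φ' t : ℝ) : EReal)
  else (⊤ : EReal)

/-- The infimum of the hyperbolic renormalized action over `D₀^{1,2}(1,T)`. -/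
def hypInf (m : Fin N → ℝ) (a x : Conf d N) (T : EReal) : EReal :=
  ⨅ (φ : ℝ → Conf d N) (φ' : ℝ → Conf d N) (_ : InD m 1 T φ φ'), hypAction m a x T φ φ'

/-- The renormalized value function `v(x)` in the hyperbolic case. -/
def hypValue (m : Fin N → ℝ) (a x : Conf d N) : ℝ :=
  (hypInf m a x ⊤).toReal - minner m a x

/-!
Coercivity: a curve of `D₀^{1,2}` grows at most like `√t ‖φ‖_D`, while the gradient of the
potential at `t a` decays like `t⁻²`, so the action is at least `½ ‖φ‖_D² - C (1 + ‖φ‖_D)`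
and a bound on the action bounds `‖φ‖_D`.

Near `x ∈ Ω`, motions of bounded action therefore stay uniformly away from collisions during a
short time `[1, 1 + δ]`. Moving their start from `y` to `z` by a linear ramp on this interval
changes the action by `O(‖y - z‖)`, so the infimum is locally Lipschitz.

It is finite because some motion has finite action: collapse `x` homothetically, at parabolic
speed, to a total collision, then expand along `a` up to `3 a` and follow `t a`. At this speed the
kinetic energy and the potential are integrable through the collision.
-/

lemma locallyLipschitzOn_of_eventually_le_add_mul_dist {α : Type*} [PseudoMetricSpace α]
    {s : Set α} {f : α → ℝ} (h : ∀ x ∈ s, ∀ M, ∃ L, ∃ t ∈ 𝓝[s] x, ∀ y ∈ t, ∀ z ∈ t,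
      f y < M → f z ≤ f y + L * dist y z) :
    LocallyLipschitzOn s f := by
  intro x hx
  obtain ⟨L₀, t₀, ht₀, h₀⟩ := h x hx (f x + 1)
  obtain ⟨L, t, ht, hL⟩ := h x hx (f x + |L₀| + 1)
  have hball : Metric.ball x 1 ∈ 𝓝[s] x := nhdsWithin_le_nhds (Metric.ball_mem_nhds x one_pos)
  refine ⟨L.toNNReal, t ∩ (t₀ ∩ Metric.ball x 1), inter_mem ht (inter_mem ht₀ hball),
    LipschitzOnWith.of_le_add_mul' L fun z hz y hy => ?_⟩
  have hyx : L₀ * dist x y ≤ |L₀| := by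
    have hdist : dist x y ≤ 1 := by rw [dist_comm]; exact (Metric.mem_ball.1 hy.2.2).le
    calc L₀ * dist x y ≤ |L₀| * dist x y := by gcongr; exact le_abs_self _
      _ ≤ |L₀| := mul_le_of_le_one_right (abs_nonneg _) hdist
  have hxy := h₀ x (mem_of_mem_nhdsWithin hx ht₀) y hy.2.1 (lt_add_one _)
  rw [dist_comm]
  exact hL y hy.1 z hz.1 (by linarith)

section Separation

variable {ι E : Type*} [NormedAddCommGroup E]

/-- The family `x` is `r`-separated: its points are pairwise at distance at least `r`. This is the
quantitative form of being collision-free. -/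
def SeparatedBy (r : ℝ) (x : ι → E) : Prop := Pairwise fun i j => r ≤ ‖x i - x j‖

lemma SeparatedBy.smul [NormedSpace ℝ E] {r : ℝ} {x : ι → E} (h : SeparatedBy r x) {c : ℝ}
    (hc : 0 ≤ c) : SeparatedBy (c * r) (c • x) := fun i j hij => by
  change c * r ≤ ‖(c • x) i - (c • x) j‖
  rw [Pi.smul_apply, Pi.smul_apply, ← smul_sub, norm_smul, Real.norm_of_nonneg hc]
  exact mul_le_mul_of_nonneg_left (h hij) hc

lemma norm_sub_sub_sub_le_two_mul [Fintype ι] (x y : ι → E) (i j : ι) :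
    ‖(x i - x j) - (y i - y j)‖ ≤ 2 * ‖x - y‖ := by
  rw [sub_sub_sub_comm, two_mul]
  exact norm_sub_le_of_le (norm_le_pi_norm (x - y) i) (norm_le_pi_norm (x - y) j)

lemma SeparatedBy.of_norm_sub_le [Fintype ι] {r s : ℝ} {x y : ι → E} (h : SeparatedBy r x)
    (hxy : ‖x - y‖ ≤ s) : SeparatedBy (r - 2 * s) y := fun i j hij => by
  have h1 := norm_sub_norm_le (x i - x j) (y i - y j)
  linarith [h hij, norm_sub_sub_sub_le_two_mul x y i j]

lemma SeparatedBy.not_collision {r : ℝ} {x : Conf d N} (h : SeparatedBy r x) (hr : 0 < r) :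
    ¬ collision x := by
  rintro ⟨i, j, hij, hx⟩
  exact (hr.trans_le (h hij)).ne' (by rw [hx, sub_self, norm_zero])

lemma norm_sub_pos_of_not_collision {x : Conf d N} (hx : ¬ collision x) {i j : Fin N}
    (hij : i ≠ j) : 0 < ‖x i - x j‖ :=
  norm_sub_pos_iff.2 fun h => hx ⟨i, j, hij, h⟩

lemma exists_separatedBy {x : Conf d N} (hx : ¬ collision x) : ∃ r > 0, SeparatedBy r x := by
  have h : ∀ᶠ r in 𝓝[>] (0 : ℝ), SeparatedBy r x := by
    refine eventually_all.2 fun i => eventually_all.2 fun j => eventually_imp_distrib_left.2 ?_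
    intro hij
    exact nhdsWithin_le_nhds (Iic_mem_nhds (norm_sub_pos_of_not_collision hx hij))
  exact (eventually_mem_nhdsWithin.and h).exists

lemma not_collision_smul {x : Conf d N} (hx : ¬ collision x) {c : ℝ} (hc : c ≠ 0) :
    ¬ collision (c • x) := fun ⟨i, j, hij, h⟩ => hx ⟨i, j, hij, smul_right_injective _ hc h⟩

end Separation

section Potential

variable {m : Fin N → ℝ}

/-- The sum of `m_i m_j` over all pairs, which scales the modulus of continuity of `U`. -/
def pairMass (m : Fin N → ℝ) : ℝ := ∑ i : Fin N, ∑ j : Fin N, if i < j then m i * m j else 0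

lemma pairMass_nonneg (hm : ∀ i, 0 ≤ m i) : 0 ≤ pairMass m :=
  Finset.sum_nonneg fun i _ => Finset.sum_nonneg fun j _ =>
    ite_nonneg (mul_nonneg (hm i) (hm j)) le_rfl

lemma measurable_U (m : Fin N → ℝ) : Measurable (U m : Conf d N → ℝ) := by
  refine Finset.measurable_sum _ fun i _ => Finset.measurable_sum _ fun j _ => ?_
  split_ifs <;> fun_prop

/-- At `c = 0` both sides vanish, because of the convention `1 / 0 = 0`. -/
lemma U_smul (m : Fin N → ℝ) {c : ℝ} (hc : 0 ≤ c) (x : Conf d N) :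
    U m (c • x) = c⁻¹ * U m x := by
  simp only [U, Finset.mul_sum, mul_ite, mul_zero, Pi.smul_apply, ← smul_sub, norm_smul,
    Real.norm_of_nonneg hc, div_eq_mul_inv, mul_inv, mul_left_comm c⁻¹]

lemma inv_sub_inv_le_div_sq {r p q s : ℝ} (hr : 0 < r) (hp : r ≤ p) (hq : 0 < q) (hs : 0 ≤ s)
    (hqp : q - p ≤ s) : p⁻¹ - q⁻¹ ≤ s / r ^ 2 := by
  have hp0 : 0 < p := hr.trans_le hp
  calc p⁻¹ - q⁻¹ ≤ (q - p) / p ^ 2 := by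
        rw [inv_sub_inv hp0.ne' hq.ne', div_le_div_iff₀ (by positivity) (by positivity)]
        nlinarith [mul_nonneg hp0.le (sq_nonneg (q - p))]
    _ ≤ s / r ^ 2 := by gcongr

lemma U_sub_U_le (hm : ∀ i, 0 ≤ m i) {r : ℝ} (hr : 0 < r) {x y : Conf d N}
    (hx : SeparatedBy r x) (hy : ¬ collision y) :
    U m x - U m y ≤ 2 * pairMass m / r ^ 2 * ‖x - y‖ := by
  have hpair (i j : Fin N) (hij : i ≠ j) :
      ‖x i - x j‖⁻¹ - ‖y i - y j‖⁻¹ ≤ 2 * ‖x - y‖ / r ^ 2 := by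
    refine inv_sub_inv_le_div_sq hr (hx hij) (norm_sub_pos_of_not_collision hy hij)
      (by positivity) ?_
    rw [norm_sub_rev x y]
    exact (norm_sub_norm_le _ _).trans (norm_sub_sub_sub_le_two_mul y x i j)
  have hsum : U m x - U m y ≤ pairMass m * (2 * ‖x - y‖ / r ^ 2) := by
    simp only [U, pairMass, ← Finset.sum_sub_distrib, Finset.sum_mul]
    refine Finset.sum_le_sum fun i _ => Finset.sum_le_sum fun j _ => ?_
    split_ifs with hij
    · rw [div_eq_mul_inv, div_eq_mul_inv, ← mul_sub]
      exact mul_le_mul_of_nonneg_left (hpair i j hij.ne) (mul_nonneg (hm i) (hm j))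
    · simp
  exact hsum.trans_eq (by ring)

lemma abs_U_sub_U_le (hm : ∀ i, 0 ≤ m i) {r : ℝ} (hr : 0 < r) {x y : Conf d N}
    (hx : SeparatedBy r x) (hy : SeparatedBy r y) :
    |U m x - U m y| ≤ 2 * pairMass m / r ^ 2 * ‖x - y‖ := by
  have h := U_sub_U_le hm hr hy (hx.not_collision hr)
  rw [norm_sub_rev] at h
  exact abs_sub_le_iff.2 ⟨U_sub_U_le hm hr hx (hy.not_collision hr), h⟩

end Potential

section MassNorm

variable {m : Fin N → ℝ}

/-- The rescaling `x ↦ (√m_i x_i)_i`, which for nonnegative masses carries the mass norm to the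
Euclidean norm of the sum; it gives access to the library's `L²` theory. -/
def massScaling (m : Fin N → ℝ) :
    Conf d N →L[ℝ] PiLp 2 fun _ : Fin N => EuclideanSpace ℝ (Fin d) :=
  (PiLp.continuousLinearEquiv 2 ℝ _).symm.toContinuousLinearMap ∘L
    ContinuousLinearMap.pi fun i => √(m i) • ContinuousLinearMap.proj i

lemma massScaling_apply (m : Fin N → ℝ) (x : Conf d N) (i : Fin N) :
    massScaling m x i = √(m i) • x i := rfl

lemma norm_massScaling (hm : ∀ i, 0 ≤ m i) (x : Conf d N) : ‖massScaling m x‖ = mnorm m x := by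
  simp only [PiLp.norm_eq_of_L2, massScaling_apply, norm_smul, mul_pow, sq_sqrt (hm _),
    Real.norm_of_nonneg (Real.sqrt_nonneg _), mnorm, minner, real_inner_self_eq_norm_sq]

lemma mnorm_le_opNorm_mul_norm (hm : ∀ i, 0 ≤ m i) (x : Conf d N) :
    mnorm m x ≤ ‖(massScaling m : Conf d N →L[ℝ] _)‖ * ‖x‖ :=
  norm_massScaling hm x ▸ (massScaling m).le_opNorm x

lemma exists_norm_le_mnorm (hm : ∀ i, 0 < m i) :
    ∃ C, 0 ≤ C ∧ ∀ x : Conf d N, ‖x‖ ≤ C * mnorm m x := by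
  have hker : (massScaling m : Conf d N →L[ℝ] _).toLinearMap.ker = ⊥ := by
    refine LinearMap.ker_eq_bot'.2 fun x hx => funext fun i => ?_
    have hi : √(m i) • x i = 0 := congrArg (fun v => v i) hx
    exact (smul_eq_zero.1 hi).resolve_left (Real.sqrt_pos.2 (hm i)).ne'
  obtain ⟨C, -, hC⟩ := LinearMap.exists_antilipschitzWith _ hker
  refine ⟨C, C.2, fun x => ?_⟩
  rw [← norm_massScaling fun i => (hm i).le]
  exact AntilipschitzWith.le_mul_norm (f := massScaling m) hC (map_zero _) x

lemma mnorm_nonneg (m : Fin N → ℝ) (x : Conf d N) : 0 ≤ mnorm m x := Real.sqrt_nonneg _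

lemma mnorm_smul (m : Fin N → ℝ) (c : ℝ) (x : Conf d N) : mnorm m (c • x) = |c| * mnorm m x := by
  have h : minner m (c • x) (c • x) = c ^ 2 * minner m x x := by
    simp only [minner, Pi.smul_apply, real_inner_smul_left, real_inner_smul_right, Finset.mul_sum]
    exact Finset.sum_congr rfl fun i _ => by ring
  rw [mnorm, h, Real.sqrt_mul (sq_nonneg c), Real.sqrt_sq_eq_abs, mnorm]

end MassNorm

section TimeSet

lemma measurableSet_timeSet (t0 : ℝ) (T : EReal) : MeasurableSet (timeSet t0 T) :=
  (isOpen_Ioi.inter (isOpen_Iio.preimage continuous_coe_real_ereal)).measurableSet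

lemma timeSet_subset_Ioi (t0 : ℝ) (T : EReal) : timeSet t0 T ⊆ Ioi t0 := fun _ ht => ht.1

lemma Ioc_subset_timeSet {t0 t : ℝ} {T : EReal} (ht : (t : EReal) < T) :
    Ioc t0 t ⊆ timeSet t0 T :=
  fun _ hs => ⟨hs.1, (EReal.coe_le_coe_iff.2 hs.2).trans_lt ht⟩

lemma timeSet_subset_iUnion_Ioc (t0 : ℝ) (T : EReal) :
    timeSet t0 T ⊆ ⋃ q : {q : ℚ // ((q : ℝ) : EReal) < T}, Ioc t0 (q : ℝ) := by
  intro t ht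
  obtain ⟨q, htq, hqT⟩ := EReal.lt_iff_exists_rat_btwn.1 ht.2
  exact mem_iUnion.2 ⟨⟨q, hqT⟩, ht.1, (EReal.coe_lt_coe_iff.1 htq).le⟩

end TimeSet

section SquareIntegrable

variable {α E : Type*} [MeasurableSpace α] {μ : Measure α} [NormedAddCommGroup E] {f : α → E}

lemma lpNorm_two_eq_sqrt_integral (hf : AEStronglyMeasurable f μ) :
    lpNorm f 2 μ = √(∫ x, ‖f x‖ ^ 2 ∂μ) := by
  rw [lpNorm_eq_integral_norm_rpow_toReal two_ne_zero ENNReal.ofNat_ne_top hf, Real.sqrt_eq_rpow]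
  simp only [ENNReal.toReal_ofNat, Real.rpow_two, one_div]

lemma norm_integral_le_sqrt_mul_sqrt [NormedSpace ℝ E] [IsFiniteMeasure μ] (hf : MemLp f 2 μ) :
    ‖∫ x, f x ∂μ‖ ≤ √(μ.real univ) * √(∫ x, ‖f x‖ ^ 2 ∂μ) := by
  have h := integral_mul_norm_le_Lp_mul_Lq (μ := μ) (f := fun x => ‖f x‖) (g := fun _ => (1 : ℝ))
    Real.HolderConjugate.two_two (by simpa using hf.norm) (memLp_const 1)
  simp only [norm_norm, norm_one, mul_one, Real.rpow_two, one_pow, integral_const, smul_eq_mul,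
    ← Real.sqrt_eq_rpow] at h
  exact (norm_integral_le_integral_norm f).trans (h.trans_eq (mul_comm _ _))

end SquareIntegrable

section Curves

variable {m : Fin N → ℝ} {t0 : ℝ} {T : EReal} {φ φ' ψ ψ' : ℝ → Conf d N}

lemma inX.add {x y : Conf d N} (hx : inX m x) (hy : inX m y) : inX m (x + y) := by
  simp only [inX, Pi.add_apply, smul_add, Finset.sum_add_distrib] at *
  rw [hx, hy, add_zero]

lemma inX.smul {x : Conf d N} (hx : inX m x) (c : ℝ) : inX m (c • x) := by
  simp only [inX, Pi.smul_apply, smul_comm _ c, ← Finset.smul_sum] at *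
  rw [hx, smul_zero]

lemma inX.sub {x y : Conf d N} (hx : inX m x) (hy : inX m y) : inX m (x - y) := by
  simpa only [neg_one_smul, sub_eq_add_neg] using hx.add (hy.smul (-1))

lemma InD.aestronglyMeasurable_deriv (h : InD m t0 T φ φ') :
    AEStronglyMeasurable φ' (volume.restrict (timeSet t0 T)) := by
  refine AEStronglyMeasurable.mono_set (timeSet_subset_iUnion_Ioc t0 T)
    (aestronglyMeasurable_iUnion_iff.2 fun q => ?_)
  rcases lt_or_ge (q : ℝ) t0 with hq | hq
  · simp [Ioc_eq_empty_of_le hq.le]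
  · exact (h.2.2.2.1 q hq q.2).aestronglyMeasurable

lemma InD.memLp (hm : ∀ i, 0 ≤ m i) (h : InD m t0 T φ φ') :
    MemLp (fun t => massScaling m (φ' t)) 2 (volume.restrict (timeSet t0 T)) := by
  rw [memLp_two_iff_integrable_sq_norm
    ((massScaling m).continuous.comp_aestronglyMeasurable h.aestronglyMeasurable_deriv)]
  simpa only [norm_massScaling hm, IntegrableOn] using h.2.2.2.2

lemma Dnorm_nonneg : 0 ≤ Dnorm m t0 T φ' := Real.sqrt_nonneg _

lemma sq_Dnorm (m : Fin N → ℝ) (t0 : ℝ) (T : EReal) (φ' : ℝ → Conf d N) :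
    Dnorm m t0 T φ' ^ 2 = ∫ t in timeSet t0 T, mnorm m (φ' t) ^ 2 :=
  Real.sq_sqrt (integral_nonneg fun _ => sq_nonneg _)

lemma InD.Dnorm_eq_lpNorm (hm : ∀ i, 0 ≤ m i) (h : InD m t0 T φ φ') :
    Dnorm m t0 T φ' =
      lpNorm (fun t => massScaling m (φ' t)) 2 (volume.restrict (timeSet t0 T)) := by
  simp only [lpNorm_two_eq_sqrt_integral (h.memLp hm).aestronglyMeasurable, norm_massScaling hm,
    Dnorm]

lemma InD.add (hm : ∀ i, 0 ≤ m i) (h : InD m t0 T φ φ') (k : InD m t0 T ψ ψ') :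
    InD m t0 T (φ + ψ) (φ' + ψ') := by
  refine ⟨by simp only [Pi.add_apply, h.1, k.1, add_zero],
    fun t ht htT => (h.2.1 t ht htT).add (k.2.1 t ht htT), fun t ht htT => ?_,
    fun t ht htT => (h.2.2.2.1 t ht htT).add (k.2.2.2.1 t ht htT), ?_⟩
  · simp only [Pi.add_apply]
    rw [integral_add (h.2.2.2.1 t ht htT) (k.2.2.2.1 t ht htT), ← h.2.2.1 t ht htT,
      ← k.2.2.1 t ht htT]
  · have hsum := ((h.memLp hm).add (k.memLp hm)).integrable_norm_pow two_ne_zero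
    simpa only [Pi.add_apply, ← map_add, norm_massScaling hm, IntegrableOn] using hsum

lemma InD.Dnorm_add_le (hm : ∀ i, 0 ≤ m i) (h : InD m t0 T φ φ') (k : InD m t0 T ψ ψ') :
    Dnorm m t0 T (φ' + ψ') ≤ Dnorm m t0 T φ' + Dnorm m t0 T ψ' := by
  rw [h.Dnorm_eq_lpNorm hm, k.Dnorm_eq_lpNorm hm, (h.add hm k).Dnorm_eq_lpNorm hm]
  simpa only [Pi.add_apply, map_add] using! lpNorm_add_le (h.memLp hm) one_le_two

lemma InD.mnorm_le (hm : ∀ i, 0 ≤ m i) (h : InD m t0 T φ φ') {t : ℝ} (ht : t ∈ timeSet t0 T) :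
    mnorm m (φ t) ≤ √(t - t0) * Dnorm m t0 T φ' := by
  have hsub := Ioc_subset_timeSet (t0 := t0) ht.2
  have hmean := norm_integral_le_sqrt_mul_sqrt
    ((h.memLp hm).mono_measure (Measure.restrict_mono_set volume hsub))
  rw [ContinuousLinearMap.integral_comp_comm _ (h.2.2.2.1 t ht.1.le ht.2),
    ← h.2.2.1 t ht.1.le ht.2] at hmean
  simp only [norm_massScaling hm, measureReal_restrict_apply_univ,
    Real.volume_real_Ioc_of_le ht.1.le] at hmean
  refine hmean.trans (mul_le_mul_of_nonneg_left (Real.sqrt_le_sqrt ?_) (Real.sqrt_nonneg _))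
  exact setIntegral_mono_set h.2.2.2.2 (ae_of_all _ fun _ => sq_nonneg _) hsub.eventuallyLE

lemma exists_norm_le_sqrt_mul_Dnorm (hm : ∀ i, 0 < m i) :
    ∃ C, 0 ≤ C ∧ ∀ (t0 : ℝ) (T : EReal) (φ φ' : ℝ → Conf d N), InD m t0 T φ φ' →
      ∀ t ∈ timeSet t0 T, ‖φ t‖ ≤ C * (√(t - t0) * Dnorm m t0 T φ') := by
  obtain ⟨C, hC0, hC⟩ := exists_norm_le_mnorm (d := d) hm
  exact ⟨C, hC0, fun t0 T φ φ' h t ht => (hC _).trans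
    (mul_le_mul_of_nonneg_left (h.mnorm_le (fun i => (hm i).le) ht) hC0)⟩

lemma InD.continuousOn (h : InD m t0 T φ φ') : ContinuousOn φ (timeSet t0 T) := by
  intro t ht
  obtain ⟨q, htq, hqT⟩ := EReal.lt_iff_exists_rat_btwn.1 ht.2
  have htq' : t < q := EReal.coe_lt_coe_iff.1 htq
  have hprim : ContinuousOn (fun t => ∫ s in Ioc t0 t, φ' s) (Icc t0 q) :=
    intervalIntegral.continuousOn_primitive
      ((integrableOn_Icc_iff_integrableOn_Ioc (by simp)).2 (h.2.2.2.1 q (ht.1.trans htq').le hqT))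
  have hφ : ContinuousOn φ (Icc t0 q) := hprim.congr fun s hs =>
    h.2.2.1 s hs.1 ((EReal.coe_le_coe_iff.2 hs.2).trans_lt hqT)
  exact (hφ.continuousAt (Icc_mem_nhds ht.1 htq')).continuousWithinAt

lemma inD_smul_of_hasDerivAt {g g' : ℝ → ℝ} {s : Set ℝ} (hs : s.Countable)
    (hg0 : g t0 = 0) (hg : Continuous g) (hderiv : ∀ t > t0, t ∉ s → HasDerivAt g (g' t) t)
    (hg' : MemLp g' 2 (volume.restrict (timeSet t0 T))) {u : Conf d N} (hu : inX m u) :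
    InD m t0 T (fun t => g t • u) (fun t => g' t • u) := by
  have hint (t : ℝ) (htT : (t : EReal) < T) : IntegrableOn g' (Ioc t0 t) :=
    (hg'.mono_measure (Measure.restrict_mono_set volume (Ioc_subset_timeSet htT))).integrable
      one_le_two
  refine ⟨by simp only [hg0, zero_smul], fun t _ _ => hu.smul _, fun t ht htT => ?_,
    fun t _ htT => (hint t htT).smul_const u, ?_⟩
  · have hftc := MeasureTheory.integral_eq_of_hasDerivAt_off_countable_of_le g g' ht hs
      hg.continuousOn (fun r hr => hderiv r hr.1.1 hr.2)
      ((intervalIntegrable_iff_integrableOn_Ioc_of_le ht).2 (hint t htT))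
    rw [hg0, sub_zero, intervalIntegral.integral_of_le ht] at hftc
    rw [integral_smul_const, hftc]
  · simp only [mnorm_smul, mul_pow, sq_abs]
    exact hg'.integrable_sq.mul_const _

end Curves

section Admissible

variable {m : Fin N → ℝ} {a x : Conf d N} {T : EReal} {φ φ' : ℝ → Conf d N}

/-- The potential part `U(γ(t)) - U(a t)` of the renormalized Lagrangian along the motion `γ`
associated with `φ`. -/
def potentialGap (m : Fin N → ℝ) (a x : Conf d N) (φ : ℝ → Conf d N) (t : ℝ) : ℝ :=
  U m (hypCurve a x φ t) - U m (t • a)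

/-- The value `½‖φ‖²_{D_T} + ∫ (U(γ) - U(a t))` of the action on the curves for which it is
finite. -/
def finiteAction (m : Fin N → ℝ) (a x : Conf d N) (T : EReal) (φ φ' : ℝ → Conf d N) : ℝ :=
  Dnorm m 1 T φ' ^ 2 / 2 + ∫ t in timeSet 1 T, potentialGap m a x φ t

/-- `(φ, φ')` is a curve of `D₀^{1,2}(1,T)` at which the action `A_{x,[1,T]}` is finite. -/
structure IsAdmissible (m : Fin N → ℝ) (a x : Conf d N) (T : EReal) (φ φ' : ℝ → Conf d N) :
    Prop where
  inD : InD m 1 T φ φ'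
  integrableOn : IntegrableOn (potentialGap m a x φ) (timeSet 1 T)
  ae_not_collision : ∀ᵐ t ∂volume.restrict (timeSet 1 T), ¬ collision (hypCurve a x φ t)

lemma hypIntegrand_eq_add_potentialGap (m : Fin N → ℝ) (a x : Conf d N) (φ φ' : ℝ → Conf d N) :
    hypIntegrand m a x φ φ' = (fun t => mnorm m (φ' t) ^ 2 / 2) + potentialGap m a x φ :=
  funext fun _ => add_sub_assoc _ _ _

lemma IsAdmissible.hypAction_eq (h : IsAdmissible m a x T φ φ') :
    hypAction m a x T φ φ' = (finiteAction m a x T φ φ' : EReal) := by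
  have hkin := h.inD.2.2.2.2.div_const 2
  rw [hypAction, hypIntegrand_eq_add_potentialGap,
    if_pos ⟨hkin.add h.integrableOn, h.ae_not_collision⟩, finiteAction, sq_Dnorm,
    ← integral_div, ← integral_add hkin h.integrableOn]
  rfl

lemma isAdmissible_of_hypAction_ne_top (h : InD m 1 T φ φ') (htop : hypAction m a x T φ φ' ≠ ⊤) :
    IsAdmissible m a x T φ φ' := by
  obtain ⟨hint, hcol⟩ := not_imp_comm.1 (fun hnot => if_neg hnot) htop
  rw [hypIntegrand_eq_add_potentialGap] at hint
  exact ⟨h, (integrable_add_iff_integrable_right (h.2.2.2.2.div_const 2)).1 hint, hcol⟩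

lemma IsAdmissible.hypInf_le (h : IsAdmissible m a x T φ φ') :
    hypInf m a x T ≤ (finiteAction m a x T φ φ' : EReal) :=
  h.hypAction_eq ▸ iInf₂_le_of_le φ φ' (iInf_le _ h.inD)

lemma exists_isAdmissible_of_hypInf_lt {c : EReal} (h : hypInf m a x T < c) :
    ∃ φ φ', IsAdmissible m a x T φ φ' ∧ (finiteAction m a x T φ φ' : EReal) < c := by
  simp only [hypInf, iInf_lt_iff] at h
  obtain ⟨φ, φ', hD, hlt⟩ := h
  have hadm := isAdmissible_of_hypAction_ne_top hD hlt.ne_top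
  exact ⟨φ, φ', hadm, hadm.hypAction_eq ▸ hlt⟩

lemma InD.aestronglyMeasurable_potentialGap (h : InD m 1 T φ φ') (a x : Conf d N) :
    AEStronglyMeasurable (potentialGap m a x φ) (volume.restrict (timeSet 1 T)) := by
  have hφ := (h.continuousOn.aemeasurable (μ := volume) (measurableSet_timeSet 1 T))
  have hγ : AEMeasurable (hypCurve a x φ) (volume.restrict (timeSet 1 T)) :=
    ((hφ.add (by fun_prop)).add_const x).sub_const a
  exact (((measurable_U m).comp_aemeasurable hγ).sub
    ((measurable_U m).comp_aemeasurable (by fun_prop))).aestronglyMeasurable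

end Admissible

section Coercivity

variable {m : Fin N → ℝ} {a x : Conf d N} {T : EReal} {φ φ' : ℝ → Conf d N}

lemma hypCurve_sub_smul (a x : Conf d N) (φ : ℝ → Conf d N) (t : ℝ) :
    hypCurve a x φ t - t • a = φ t + (x - a) := by
  rw [hypCurve]; abel

lemma neg_le_potentialGap (hm : ∀ i, 0 ≤ m i) {r : ℝ} (hr : 0 < r) (ha : SeparatedBy r a) {t : ℝ}
    (ht : 0 < t) (hcol : ¬ collision (hypCurve a x φ t)) :
    -(2 * pairMass m / (t * r) ^ 2 * ‖φ t + (x - a)‖) ≤ potentialGap m a x φ t := by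
  rw [← hypCurve_sub_smul, norm_sub_rev]
  linarith [U_sub_U_le hm (mul_pos ht hr) (ha.smul ht.le) hcol,
    show potentialGap m a x φ t = U m (hypCurve a x φ t) - U m (t • a) from rfl]

lemma exists_neg_rpow_le_potentialGap (hm : ∀ i, 0 < m i) (ha : ¬ collision a) :
    ∃ C, 0 ≤ C ∧ ∀ (T : EReal) (x : Conf d N) (φ φ' : ℝ → Conf d N), InD m 1 T φ φ' →
      ∀ t ∈ timeSet 1 T, ¬ collision (hypCurve a x φ t) →
        -(C * (Dnorm m 1 T φ' + ‖x - a‖) * t ^ (-(3 / 2) : ℝ)) ≤ potentialGap m a x φ t := by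
  obtain ⟨r, hr, har⟩ := exists_separatedBy ha
  obtain ⟨C, hC0, hC⟩ := exists_norm_le_sqrt_mul_Dnorm (d := d) hm
  have hm0 (i : Fin N) : 0 ≤ m i := (hm i).le
  have hP := pairMass_nonneg hm0
  refine ⟨2 * pairMass m / r ^ 2 * (C + 1), by positivity, fun T x φ φ' h t ht hcol => ?_⟩
  have ht1 : 1 < t := ht.1
  have hD : 0 ≤ Dnorm m 1 T φ' := Dnorm_nonneg
  have hsqrt : 1 ≤ √t := Real.one_le_sqrt.2 ht1.le
  have hpath : ‖φ t + (x - a)‖ ≤ √t * ((C + 1) * (Dnorm m 1 T φ' + ‖x - a‖)) := by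
    have hφ : ‖φ t‖ ≤ C * (√t * Dnorm m 1 T φ') :=
      (hC 1 T φ φ' h t ht).trans (by gcongr; linarith)
    have hx : ‖x - a‖ ≤ √t * ‖x - a‖ := le_mul_of_one_le_left (norm_nonneg _) hsqrt
    have hCx : 0 ≤ √t * (C * ‖x - a‖ + Dnorm m 1 T φ') := by positivity
    linarith [norm_add_le (φ t) (x - a)]
  have hrpow : √t / t ^ 2 = t ^ (-(3 / 2) : ℝ) := by
    rw [Real.sqrt_eq_rpow, ← Real.rpow_natCast, ← Real.rpow_sub (by linarith)]
    norm_num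
  have hmain : 2 * pairMass m / (t * r) ^ 2 * ‖φ t + (x - a)‖ ≤
      2 * pairMass m / r ^ 2 * (C + 1) * (Dnorm m 1 T φ' + ‖x - a‖) * t ^ (-(3 / 2) : ℝ) :=
    calc 2 * pairMass m / (t * r) ^ 2 * ‖φ t + (x - a)‖
        ≤ 2 * pairMass m / (t * r) ^ 2 * (√t * ((C + 1) * (Dnorm m 1 T φ' + ‖x - a‖))) := by
          gcongr
      _ = 2 * pairMass m / r ^ 2 * (C + 1) * (Dnorm m 1 T φ' + ‖x - a‖) * (√t / t ^ 2) := by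
          field_simp
      _ = _ := by rw [hrpow]
  exact (neg_le_neg hmain).trans (neg_le_potentialGap hm0 hr har (by linarith) hcol)

lemma integrableOn_timeSet_rpow (T : EReal) :
    IntegrableOn (fun t : ℝ => t ^ (-(3 / 2) : ℝ)) (timeSet 1 T) :=
  (integrableOn_Ioi_rpow_of_lt (by norm_num) one_pos).mono_set (timeSet_subset_Ioi 1 T)

lemma setIntegral_timeSet_rpow_le (T : EReal) :
    ∫ t in timeSet 1 T, t ^ (-(3 / 2) : ℝ) ≤ 2 := by
  have hIoi : ∫ t in Ioi (1 : ℝ), t ^ (-(3 / 2) : ℝ) = 2 := by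
    rw [integral_Ioi_rpow_of_lt (by norm_num) one_pos, Real.one_rpow]
    norm_num
  refine (setIntegral_mono_set
    (integrableOn_Ioi_rpow_of_lt (a := -(3 / 2)) (by norm_num) one_pos) ?_
    (timeSet_subset_Ioi 1 T).eventuallyLE).trans_eq hIoi
  exact (ae_restrict_iff' measurableSet_Ioi).2
    (ae_of_all _ fun t ht => Real.rpow_nonneg (one_pos.trans ht).le _)

lemma exists_coercive_finiteAction (hm : ∀ i, 0 < m i) (ha : ¬ collision a) :
    ∃ C, 0 ≤ C ∧ ∀ (T : EReal) (x : Conf d N) (φ φ' : ℝ → Conf d N),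
      IsAdmissible m a x T φ φ' →
        Dnorm m 1 T φ' ^ 2 / 2 - C * (Dnorm m 1 T φ' + ‖x - a‖) ≤ finiteAction m a x T φ φ' := by
  obtain ⟨C, hC0, hC⟩ := exists_neg_rpow_le_potentialGap hm ha
  refine ⟨2 * C, by positivity, fun T x φ φ' h => ?_⟩
  set R := C * (Dnorm m 1 T φ' + ‖x - a‖)
  have hR : 0 ≤ R := mul_nonneg hC0 (add_nonneg Dnorm_nonneg (norm_nonneg _))
  have hgap : ∫ t in timeSet 1 T, -(R * t ^ (-(3 / 2) : ℝ)) ≤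
      ∫ t in timeSet 1 T, potentialGap m a x φ t := by
    refine integral_mono_ae ((integrableOn_timeSet_rpow T).const_mul R).neg h.integrableOn ?_
    filter_upwards [ae_restrict_mem (measurableSet_timeSet 1 T), h.ae_not_collision] with t ht hcol
    exact hC T x φ φ' h.inD t ht hcol
  rw [integral_neg, integral_const_mul] at hgap
  have h2 := mul_le_mul_of_nonneg_left (setIntegral_timeSet_rpow_le T) hR
  rw [finiteAction, mul_assoc]
  linarith

lemma hypInf_ne_bot (hm : ∀ i, 0 < m i) (ha : ¬ collision a) (x : Conf d N) (T : EReal) :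
    hypInf m a x T ≠ ⊥ := by
  obtain ⟨C, -, hC⟩ := exists_coercive_finiteAction hm ha
  intro hbot
  obtain ⟨φ, φ', hadm, hlt⟩ := exists_isAdmissible_of_hypInf_lt
    (hbot.trans_lt (EReal.bot_lt_coe (-(C ^ 2 / 2) - C * ‖x - a‖)))
  have hlow := hC T x φ φ' hadm
  have := EReal.coe_lt_coe_iff.1 hlt
  nlinarith [sq_nonneg (Dnorm m 1 T φ' - C)]

lemma exists_Dnorm_le_of_finiteAction_le (hm : ∀ i, 0 < m i) (ha : ¬ collision a) (M ρ : ℝ) :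
    ∃ R, ∀ (T : EReal) (x : Conf d N) (φ φ' : ℝ → Conf d N),
      IsAdmissible m a x T φ φ' → ‖x - a‖ ≤ ρ → finiteAction m a x T φ φ' ≤ M →
        Dnorm m 1 T φ' ≤ R := by
  obtain ⟨C, hC0, hC⟩ := exists_coercive_finiteAction hm ha
  refine ⟨C + √(2 * M + 2 * C * ρ + C ^ 2), fun T x φ φ' h hx hM => ?_⟩
  have hsq : (Dnorm m 1 T φ' - C) ^ 2 ≤ 2 * M + 2 * C * ρ + C ^ 2 := by
    linarith [hC T x φ φ' h, mul_le_mul_of_nonneg_left hx hC0]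
  linarith [(le_abs_self _).trans (Real.abs_le_sqrt hsq)]

end Coercivity

section Ramp

variable {m : Fin N → ℝ} {a y z : Conf d N} {T : EReal} {φ φ' : ℝ → Conf d N} {r δ : ℝ}

/-- The scalar profile growing linearly from `0` at time `1` to `1` at time `1 + δ`, and equal to
`1` afterwards. Adding `ramp δ • (y - z)` to a curve moves the start of its motion from `y` to `z`
without changing the motion after time `1 + δ`. -/
def ramp (δ t : ℝ) : ℝ := min (t - 1) δ / δ

/-- The derivative of `ramp δ` away from its corners. -/
def rampDeriv (δ : ℝ) : ℝ → ℝ := (Ioc 1 (1 + δ)).indicator fun _ => δ⁻¹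

lemma ramp_eq_one (hδ : 0 < δ) {t : ℝ} (ht : 1 + δ ≤ t) : ramp δ t = 1 := by
  rw [ramp, min_eq_right (by linarith), div_self hδ.ne']

lemma ramp_mem_Icc (hδ : 0 < δ) {t : ℝ} (ht : 1 ≤ t) : ramp δ t ∈ Icc (0 : ℝ) 1 :=
  ⟨div_nonneg (le_min (by linarith) hδ.le) hδ.le, div_le_one_of_le₀ (min_le_right _ _) hδ.le⟩

lemma hasDerivAt_ramp (hδ : 0 < δ) {t : ℝ} (ht : 1 < t) (hne : t ≠ 1 + δ) :
    HasDerivAt (ramp δ) (rampDeriv δ t) t := by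
  rcases hne.lt_or_gt with hlt | hgt
  · rw [rampDeriv, indicator_of_mem (mem_Ioc.2 ⟨ht, hlt.le⟩), ← one_div]
    refine (((hasDerivAt_id t).sub_const 1).div_const δ).congr_of_eventuallyEq ?_
    filter_upwards [Iio_mem_nhds hlt] with s hs
    rw [ramp, min_eq_left (by linarith [mem_Iio.1 hs]), id_eq]
  · rw [rampDeriv, indicator_of_notMem (notMem_Ioc_of_gt hgt)]
    refine (hasDerivAt_const t (1 : ℝ)).congr_of_eventuallyEq ?_
    filter_upwards [Ioi_mem_nhds hgt] with s hs using ramp_eq_one hδ hs.le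

lemma inD_ramp_smul (hδ : 0 < δ) (T : EReal) {u : Conf d N} (hu : inX m u) :
    InD m 1 T (fun t => ramp δ t • u) (fun t => rampDeriv δ t • u) := by
  refine inD_smul_of_hasDerivAt (countable_singleton (1 + δ)) ?_ ?_
    (fun t ht hne => hasDerivAt_ramp hδ ht hne) ?_ hu
  · rw [ramp, sub_self, min_eq_left hδ.le, zero_div]
  · unfold ramp
    fun_prop
  · exact (memLp_indicator_const 2 measurableSet_Ioc _ (Or.inr measure_Ioc_lt_top.ne)).restrict _

lemma measureReal_restrict_timeSet_Ioc_le (hδ : 0 ≤ δ) (T : EReal) :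
    (volume.restrict (timeSet 1 T)).real (Ioc 1 (1 + δ)) ≤ δ :=
  (ENNReal.toReal_mono measure_Ioc_lt_top.ne (Measure.restrict_apply_le _ _)).trans_eq
    (by rw [Real.volume_Ioc, add_sub_cancel_left, ENNReal.toReal_ofReal hδ])

lemma Dnorm_rampDeriv_smul_le (m : Fin N → ℝ) (hδ : 0 < δ) (T : EReal) (u : Conf d N) :
    Dnorm m 1 T (fun t => rampDeriv δ t • u) ≤ mnorm m u / √δ := by
  have hspeed (t : ℝ) : mnorm m (rampDeriv δ t • u) ^ 2 =
      (Ioc 1 (1 + δ)).indicator (fun _ => (δ⁻¹ * mnorm m u) ^ 2) t := by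
    rw [mnorm_smul, mul_pow, sq_abs, rampDeriv]
    by_cases ht : t ∈ Ioc 1 (1 + δ) <;> simp [ht, mul_pow]
  have hlen := measureReal_restrict_timeSet_Ioc_le hδ.le T
  simp only [Dnorm, hspeed, integral_indicator_const _ measurableSet_Ioc, smul_eq_mul]
  calc √(_ * (δ⁻¹ * mnorm m u) ^ 2) ≤ √(δ * (δ⁻¹ * mnorm m u) ^ 2) := by gcongr
    _ = √(mnorm m u ^ 2 / δ) := by congr 1; field_simp
    _ = mnorm m u / √δ := by rw [Real.sqrt_div (sq_nonneg _), Real.sqrt_sq (mnorm_nonneg m u)]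

lemma hypCurve_add_ramp_smul (a y z : Conf d N) (φ : ℝ → Conf d N) (δ t : ℝ) :
    hypCurve a z (φ + fun t => ramp δ t • (y - z)) t =
      hypCurve a y φ t - (1 - ramp δ t) • (y - z) := by
  simp only [hypCurve, Pi.add_apply, sub_smul, one_smul]
  abel

lemma hypCurve_add_ramp_smul_of_le (hδ : 0 < δ) {t : ℝ} (ht : 1 + δ ≤ t) :
    hypCurve a z (φ + fun t => ramp δ t • (y - z)) t = hypCurve a y φ t := by
  rw [hypCurve_add_ramp_smul, ramp_eq_one hδ ht, sub_self, zero_smul, sub_zero]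

lemma norm_hypCurve_sub_add_ramp_smul_le (hδ : 0 < δ) {t : ℝ} (ht : 1 ≤ t) :
    ‖hypCurve a y φ t - hypCurve a z (φ + fun t => ramp δ t • (y - z)) t‖ ≤ ‖y - z‖ := by
  have hramp := ramp_mem_Icc hδ ht
  rw [hypCurve_add_ramp_smul, sub_sub_cancel, norm_smul,
    Real.norm_of_nonneg (sub_nonneg.2 hramp.2)]
  exact mul_le_of_le_one_left (norm_nonneg _) (sub_le_self 1 hramp.1)

lemma separatedBy_hypCurve_add_ramp_smul (hδ : 0 < δ) (hyz : ‖y - z‖ ≤ r / 4) {t : ℝ}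
    (ht : 1 ≤ t) (hsep : SeparatedBy r (hypCurve a y φ t)) :
    SeparatedBy (r / 2) (hypCurve a z (φ + fun t => ramp δ t • (y - z)) t) := by
  have h := hsep.of_norm_sub_le ((norm_hypCurve_sub_add_ramp_smul_le hδ ht).trans hyz)
  rwa [show r - 2 * (r / 4) = r / 2 by ring] at h

lemma abs_potentialGap_add_ramp_sub_le (hm : ∀ i, 0 ≤ m i) (hr : 0 < r) (hδ : 0 < δ)
    (hyz : ‖y - z‖ ≤ r / 4) {t : ℝ} (ht : 1 < t)
    (hsep : t ≤ 1 + δ → SeparatedBy r (hypCurve a y φ t)) :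
    |potentialGap m a z (φ + fun t => ramp δ t • (y - z)) t - potentialGap m a y φ t| ≤
      (Ioc 1 (1 + δ)).indicator (fun _ => 2 * pairMass m / (r / 2) ^ 2 * ‖y - z‖) t := by
  have hP := pairMass_nonneg hm
  rw [potentialGap, potentialGap, sub_sub_sub_cancel_right, abs_sub_comm]
  rcases le_or_gt t (1 + δ) with hle | hgt
  · rw [indicator_of_mem (mem_Ioc.2 ⟨ht, hle⟩)]
    have hsep' : SeparatedBy (r / 2) (hypCurve a y φ t) :=
      fun i j hij => (half_le_self hr.le).trans (hsep hle hij)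
    refine (abs_U_sub_U_le hm (half_pos hr) hsep'
      (separatedBy_hypCurve_add_ramp_smul hδ hyz ht.le (hsep hle))).trans ?_
    exact mul_le_mul_of_nonneg_left (norm_hypCurve_sub_add_ramp_smul_le hδ ht.le) (by positivity)
  · rw [indicator_of_notMem (notMem_Ioc_of_gt hgt), hypCurve_add_ramp_smul_of_le hδ hgt.le,
      sub_self, abs_zero]

lemma integrableOn_timeSet_indicator_Ioc (T : EReal) (δ K : ℝ) :
    IntegrableOn ((Ioc 1 (1 + δ)).indicator fun _ => K) (timeSet 1 T) :=
  ((integrable_indicator_iff measurableSet_Ioc).2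
    (integrableOn_const measure_Ioc_lt_top.ne)).integrableOn

lemma IsAdmissible.add_ramp (hm : ∀ i, 0 ≤ m i) (h : IsAdmissible m a y T φ φ') (hr : 0 < r)
    (hδ : 0 < δ) (hy : inX m y) (hz : inX m z) (hyz : ‖y - z‖ ≤ r / 4)
    (hsep : ∀ t ∈ timeSet 1 T, t ≤ 1 + δ → SeparatedBy r (hypCurve a y φ t)) :
    IsAdmissible m a z T (φ + fun t => ramp δ t • (y - z))
      (φ' + fun t => rampDeriv δ t • (y - z)) := by
  have hD := h.inD.add hm (inD_ramp_smul hδ T (hy.sub hz))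
  refine ⟨hD, ?_, ?_⟩
  · have hbound := h.integrableOn.abs.add (integrableOn_timeSet_indicator_Ioc T δ
      (2 * pairMass m / (r / 2) ^ 2 * ‖y - z‖))
    refine hbound.mono' (hD.aestronglyMeasurable_potentialGap a z) ?_
    filter_upwards [ae_restrict_mem (measurableSet_timeSet 1 T)] with t ht
    have hgap := abs_potentialGap_add_ramp_sub_le hm hr hδ hyz ht.1 (hsep t ht)
    exact sub_le_iff_le_add'.1 ((abs_sub_abs_le_abs_sub _ _).trans hgap)
  · filter_upwards [ae_restrict_mem (measurableSet_timeSet 1 T), h.ae_not_collision] with t ht hcol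
    rcases le_or_gt t (1 + δ) with hle | hgt
    · exact (separatedBy_hypCurve_add_ramp_smul hδ hyz ht.1.le (hsep t ht hle)).not_collision
        (half_pos hr)
    · rwa [hypCurve_add_ramp_smul_of_le hδ hgt.le]

lemma setIntegral_potentialGap_add_ramp_le (hm : ∀ i, 0 ≤ m i) (h : IsAdmissible m a y T φ φ')
    (hr : 0 < r) (hδ : 0 < δ) (hy : inX m y) (hz : inX m z) (hyz : ‖y - z‖ ≤ r / 4)
    (hsep : ∀ t ∈ timeSet 1 T, t ≤ 1 + δ → SeparatedBy r (hypCurve a y φ t)) :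
    ∫ t in timeSet 1 T, potentialGap m a z (φ + fun t => ramp δ t • (y - z)) t ≤
      (∫ t in timeSet 1 T, potentialGap m a y φ t) +
        δ * (2 * pairMass m / (r / 2) ^ 2 * ‖y - z‖) := by
  have hP := pairMass_nonneg hm
  set K := 2 * pairMass m / (r / 2) ^ 2 * ‖y - z‖
  have hK : 0 ≤ K := by positivity
  have hind := integrableOn_timeSet_indicator_Ioc T δ K
  have hmono : ∫ t in timeSet 1 T, potentialGap m a z (φ + fun t => ramp δ t • (y - z)) t ≤
      ∫ t in timeSet 1 T, (potentialGap m a y φ t + (Ioc 1 (1 + δ)).indicator (fun _ => K) t) := by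
    refine setIntegral_mono_on (h.add_ramp hm hr hδ hy hz hyz hsep).integrableOn
      (h.integrableOn.add hind) (measurableSet_timeSet 1 T) fun t ht => ?_
    exact sub_le_iff_le_add'.1 ((le_abs_self _).trans
      (abs_potentialGap_add_ramp_sub_le hm hr hδ hyz ht.1 (hsep t ht)))
  rw [integral_add h.integrableOn hind, integral_indicator_const _ measurableSet_Ioc,
    smul_eq_mul] at hmono
  refine hmono.trans (add_le_add_right (mul_le_mul_of_nonneg_right ?_ hK) _)
  exact measureReal_restrict_timeSet_Ioc_le hδ.le T

lemma finiteAction_add_ramp_le (hm : ∀ i, 0 ≤ m i) (h : IsAdmissible m a y T φ φ') (hr : 0 < r)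
    (hδ : 0 < δ) (hy : inX m y) (hz : inX m z) (hyz : ‖y - z‖ ≤ r / 4)
    (hsep : ∀ t ∈ timeSet 1 T, t ≤ 1 + δ → SeparatedBy r (hypCurve a y φ t)) :
    finiteAction m a z T (φ + fun t => ramp δ t • (y - z))
        (φ' + fun t => rampDeriv δ t • (y - z)) ≤
      finiteAction m a y T φ φ' + Dnorm m 1 T φ' * (mnorm m (y - z) / √δ) +
        mnorm m (y - z) ^ 2 / (2 * δ) + δ * (2 * pairMass m / (r / 2) ^ 2 * ‖y - z‖) := by
  have hkin := pow_le_pow_left₀ Dnorm_nonneg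
    ((h.inD.Dnorm_add_le hm (inD_ramp_smul hδ T (hy.sub hz))).trans
      (add_le_add_right (Dnorm_rampDeriv_smul_le m hδ T (y - z)) _)) 2
  have hsq : (mnorm m (y - z) / √δ) ^ 2 / 2 = mnorm m (y - z) ^ 2 / (2 * δ) := by
    rw [div_pow, Real.sq_sqrt hδ.le, div_div, mul_comm δ]
  rw [finiteAction, finiteAction, ← hsq]
  linarith [setIntegral_potentialGap_add_ramp_le hm h hr hδ hy hz hyz hsep]

lemma finiteAction_add_ramp_le_add_mul_norm (hm : ∀ i, 0 ≤ m i) (h : IsAdmissible m a y T φ φ')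
    (hr : 0 < r) (hδ : 0 < δ) (hy : inX m y) (hz : inX m z) (hyz : ‖y - z‖ ≤ r / 4)
    (hsep : ∀ t ∈ timeSet 1 T, t ≤ 1 + δ → SeparatedBy r (hypCurve a y φ t)) {R B : ℝ}
    (hR : Dnorm m 1 T φ' ≤ R) (hB : mnorm m (y - z) ≤ B * ‖y - z‖) :
    finiteAction m a z T (φ + fun t => ramp δ t • (y - z))
        (φ' + fun t => rampDeriv δ t • (y - z)) ≤
      finiteAction m a y T φ φ' +
        (R * (B / √δ) + B ^ 2 * (r / 4) / (2 * δ) + δ * (2 * pairMass m / (r / 2) ^ 2)) *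
          ‖y - z‖ := by
  have hu := mnorm_nonneg m (y - z)
  have hlin : Dnorm m 1 T φ' * (mnorm m (y - z) / √δ) ≤ R * (B / √δ) * ‖y - z‖ :=
    calc Dnorm m 1 T φ' * (mnorm m (y - z) / √δ) ≤ R * (B * ‖y - z‖ / √δ) :=
          mul_le_mul hR (by gcongr) (by positivity) (Dnorm_nonneg.trans hR)
      _ = R * (B / √δ) * ‖y - z‖ := by ring
  have hquad : mnorm m (y - z) ^ 2 / (2 * δ) ≤ B ^ 2 * (r / 4) / (2 * δ) * ‖y - z‖ :=
    calc mnorm m (y - z) ^ 2 / (2 * δ) ≤ (B * ‖y - z‖) ^ 2 / (2 * δ) := by gcongr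
      _ = B ^ 2 * ‖y - z‖ / (2 * δ) * ‖y - z‖ := by ring
      _ ≤ B ^ 2 * (r / 4) / (2 * δ) * ‖y - z‖ := by gcongr
  linarith [finiteAction_add_ramp_le hm h hr hδ hy hz hyz hsep]

end Ramp

section ParabolicCollapse

variable {m : Fin N → ℝ} {a x : Conf d N}

/-- The function `s ↦ s ^ (2 / 3)` on `[0, 1]`, extended by constants. The exponent is that of
the homothetic parabolic motions, along which both the kinetic energy and the potential are
integrable at a total collision. -/
def clippedPow (s : ℝ) : ℝ := min (max s 0) 1 ^ (2 / 3 : ℝ)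

/-- The derivative of `clippedPow` away from `0` and `1`. -/
def clippedPowDeriv : ℝ → ℝ := (Ioo 0 1).indicator fun s => 2 / 3 * s ^ (-(1 / 3) : ℝ)

lemma clippedPow_of_nonpos {s : ℝ} (hs : s ≤ 0) : clippedPow s = 0 := by
  rw [clippedPow, max_eq_right hs, min_eq_left zero_le_one, Real.zero_rpow (by norm_num)]

lemma clippedPow_of_mem_Icc {s : ℝ} (hs : s ∈ Icc (0 : ℝ) 1) : clippedPow s = s ^ (2 / 3 : ℝ) := by
  rw [clippedPow, max_eq_left hs.1, min_eq_left hs.2]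

lemma clippedPow_of_one_le {s : ℝ} (hs : 1 ≤ s) : clippedPow s = 1 := by
  rw [clippedPow, max_eq_left (zero_le_one.trans hs), min_eq_right hs, Real.one_rpow]

lemma continuous_clippedPow : Continuous clippedPow :=
  ((continuous_id.max continuous_const).min continuous_const).rpow_const
    fun _ => Or.inr (by norm_num)

lemma hasDerivAt_clippedPow {s : ℝ} (h0 : s ≠ 0) (h1 : s ≠ 1) :
    HasDerivAt clippedPow (clippedPowDeriv s) s := by
  rcases h0.lt_or_gt with hneg | hpos
  · rw [clippedPowDeriv, indicator_of_notMem fun h => h.1.not_gt hneg]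
    refine (hasDerivAt_const s (0 : ℝ)).congr_of_eventuallyEq ?_
    filter_upwards [Iio_mem_nhds hneg] with u hu using clippedPow_of_nonpos hu.le
  rcases h1.lt_or_gt with hlt | hgt
  · rw [clippedPowDeriv, indicator_of_mem (mem_Ioo.2 ⟨hpos, hlt⟩),
      show (-(1 / 3) : ℝ) = 2 / 3 - 1 by norm_num]
    refine (Real.hasDerivAt_rpow_const (Or.inl h0)).congr_of_eventuallyEq ?_
    filter_upwards [Icc_mem_nhds hpos hlt] with u hu using clippedPow_of_mem_Icc hu
  · rw [clippedPowDeriv, indicator_of_notMem fun h => h.2.not_gt hgt]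
    refine (hasDerivAt_const s (1 : ℝ)).congr_of_eventuallyEq ?_
    filter_upwards [Ioi_mem_nhds hgt] with u hu using clippedPow_of_one_le hu.le

lemma integrable_indicator_Ioo_rpow :
    Integrable ((Ioo (0 : ℝ) 1).indicator fun s => s ^ (-(2 / 3) : ℝ)) :=
  (integrable_indicator_iff measurableSet_Ioo).2
    ((intervalIntegral.integrableOn_Ioo_rpow_iff one_pos).2 (by norm_num))

lemma memLp_clippedPowDeriv : MemLp clippedPowDeriv 2 := by
  have hmeas : Measurable clippedPowDeriv :=
    (measurable_const.mul (measurable_id.pow_const _)).indicator measurableSet_Ioo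
  rw [memLp_two_iff_integrable_sq hmeas.aestronglyMeasurable]
  refine (integrable_indicator_Ioo_rpow.const_mul (4 / 9)).congr (ae_of_all _ fun s => ?_)
  by_cases hs : s ∈ Ioo (0 : ℝ) 1
  · simp only [clippedPowDeriv, indicator_of_mem hs]
    rw [mul_pow, ← Real.rpow_mul_natCast hs.1.le]
    norm_num
  · simp only [clippedPowDeriv, indicator_of_notMem hs, mul_zero, zero_pow two_ne_zero]

/-- The curve whose motion from `x` collapses homothetically to a total collision at time `2`, then
expands homothetically along `a` and moves as `t a` from time `3` on. The ramp term cancels the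
drift `(t - 1) a` of the motion on `[1, 3]`. -/
def collapseCurve (a x : Conf d N) : ℝ → Conf d N :=
  (fun t => (clippedPow (2 - t) - 1) • x) +
    ((fun t => clippedPow (t - 2) • (3 : ℝ) • a) + fun t => ramp 2 t • (-2 : ℝ) • a)

/-- The derivative of `collapseCurve a x` away from times `2` and `3`. -/
def collapseCurveDeriv (a x : Conf d N) : ℝ → Conf d N :=
  (fun t => -clippedPowDeriv (2 - t) • x) +
    ((fun t => clippedPowDeriv (t - 2) • (3 : ℝ) • a) + fun t => rampDeriv 2 t • (-2 : ℝ) • a)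

lemma inD_collapseCurve (hm : ∀ i, 0 ≤ m i) (ha : inX m a) (hx : inX m x) (T : EReal) :
    InD m 1 T (collapseCurve a x) (collapseCurveDeriv a x) := by
  have hin : InD m 1 T (fun t => (clippedPow (2 - t) - 1) • x)
      fun t => -clippedPowDeriv (2 - t) • x := by
    refine inD_smul_of_hasDerivAt (g := fun t => clippedPow (2 - t) - 1) (countable_singleton 2)
      ?_ ((continuous_clippedPow.comp (continuous_const.sub continuous_id)).sub continuous_const)
      (fun t ht hne => ?_) ?_ hx
    · rw [clippedPow_of_one_le (by norm_num), sub_self]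
    · have h0 : 2 - t ≠ 0 := sub_ne_zero.2 (Ne.symm hne)
      exact ((hasDerivAt_clippedPow h0 (by linarith)).comp_const_sub 2 t).sub_const 1
    · exact ((memLp_clippedPowDeriv.comp_measurePreserving
        (Measure.measurePreserving_sub_left volume 2)).neg).restrict _
  have hout : InD m 1 T (fun t => clippedPow (t - 2) • (3 : ℝ) • a)
      fun t => clippedPowDeriv (t - 2) • (3 : ℝ) • a := by
    refine inD_smul_of_hasDerivAt (s := {2, 3}) (toFinite _).countable ?_
      (continuous_clippedPow.comp (continuous_id.sub continuous_const)) (fun t _ hne => ?_) ?_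
      (ha.smul 3)
    · exact clippedPow_of_nonpos (by norm_num)
    · rw [mem_insert_iff, mem_singleton_iff, not_or] at hne
      have h1 : t - 2 ≠ 1 := fun h => hne.2 (by linarith)
      exact (hasDerivAt_clippedPow (sub_ne_zero.2 hne.1) h1).comp_sub_const t 2
    · exact (memLp_clippedPowDeriv.comp_measurePreserving
        (measurePreserving_sub_right volume 2)).restrict _
  exact hin.add hm (hout.add hm (inD_ramp_smul two_pos T (ha.smul (-2))))

lemma hypCurve_collapseCurve (a x : Conf d N) (t : ℝ) :
    hypCurve a x (collapseCurve a x) t =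
      clippedPow (2 - t) • x + (3 * clippedPow (t - 2) - 2 * ramp 2 t + t - 1) • a := by
  simp only [hypCurve, collapseCurve, Pi.add_apply]
  module

lemma hypCurve_collapseCurve_of_lt_two {t : ℝ} (h1 : 1 < t) (h2 : t < 2) :
    hypCurve a x (collapseCurve a x) t = (2 - t) ^ (2 / 3 : ℝ) • x := by
  have hcoef : 3 * clippedPow (t - 2) - 2 * ramp 2 t + t - 1 = 0 := by
    rw [clippedPow_of_nonpos (by linarith), ramp, min_eq_left (by linarith)]
    ring
  rw [hypCurve_collapseCurve, hcoef, zero_smul, add_zero,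
    clippedPow_of_mem_Icc ⟨by linarith, by linarith⟩]

lemma hypCurve_collapseCurve_of_two_lt {t : ℝ} (h2 : 2 < t) (h3 : t < 3) :
    hypCurve a x (collapseCurve a x) t = (3 * (t - 2) ^ (2 / 3 : ℝ)) • a := by
  have hcoef : 3 * clippedPow (t - 2) - 2 * ramp 2 t + t - 1 = 3 * (t - 2) ^ (2 / 3 : ℝ) := by
    rw [clippedPow_of_mem_Icc ⟨by linarith, by linarith⟩, ramp, min_eq_left (by linarith)]
    ring
  rw [hypCurve_collapseCurve, hcoef, clippedPow_of_nonpos (by linarith), zero_smul, zero_add]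

lemma hypCurve_collapseCurve_of_three_le {t : ℝ} (h3 : 3 ≤ t) :
    hypCurve a x (collapseCurve a x) t = t • a := by
  have hcoef : 3 * clippedPow (t - 2) - 2 * ramp 2 t + t - 1 = t := by
    rw [clippedPow_of_one_le (by linarith), ramp_eq_one two_pos (by linarith)]
    ring
  rw [hypCurve_collapseCurve, hcoef, clippedPow_of_nonpos (by linarith), zero_smul, zero_add]

lemma not_collision_hypCurve_collapseCurve (ha : ¬ collision a) (hx : ¬ collision x) {t : ℝ}
    (h1 : 1 < t) (h2 : t ≠ 2) : ¬ collision (hypCurve a x (collapseCurve a x) t) := by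
  rcases h2.lt_or_gt with hlt | hgt
  · rw [hypCurve_collapseCurve_of_lt_two h1 hlt]
    exact not_collision_smul hx (Real.rpow_pos_of_pos (by linarith) _).ne'
  rcases lt_or_ge t 3 with hlt | hge
  · rw [hypCurve_collapseCurve_of_two_lt hgt hlt]
    exact not_collision_smul ha
      (mul_pos three_pos (Real.rpow_pos_of_pos (sub_pos.2 hgt) _)).ne'
  · rw [hypCurve_collapseCurve_of_three_le hge]
    exact not_collision_smul ha (by linarith)

lemma potentialGap_collapseCurve (m : Fin N → ℝ) (a x : Conf d N) {t : ℝ} (h1 : 1 < t)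
    (h2 : t ≠ 2) (h3 : t ≠ 3) :
    potentialGap m a x (collapseCurve a x) t =
      (Ioo 0 1).indicator (fun s => s ^ (-(2 / 3) : ℝ)) (2 - t) * U m x +
        (Ioo 0 1).indicator (fun s => s ^ (-(2 / 3) : ℝ)) (t - 2) * (U m a / 3) -
          (Ioo 1 3).indicator (fun s => s⁻¹) t * U m a := by
  have h0 : 0 ≤ t := by linarith
  rw [potentialGap, U_smul m h0]
  rcases h2.lt_or_gt with hlt | hgt
  · have hs : 0 ≤ 2 - t := by linarith
    rw [hypCurve_collapseCurve_of_lt_two h1 hlt, U_smul m (by positivity), ← Real.rpow_neg hs,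
      indicator_of_mem (mem_Ioo.2 ⟨by linarith, by linarith⟩),
      indicator_of_notMem fun h => by linarith [h.1],
      indicator_of_mem (mem_Ioo.2 ⟨h1, by linarith⟩)]
    ring
  have hin : (Ioo (0 : ℝ) 1).indicator (fun s => s ^ (-(2 / 3) : ℝ)) (2 - t) = 0 :=
    indicator_of_notMem (fun h => by linarith [h.1]) _
  rcases h3.lt_or_gt with hlt | hgt'
  · have hs : 0 ≤ t - 2 := by linarith
    rw [hypCurve_collapseCurve_of_two_lt hgt hlt, U_smul m (by positivity), mul_inv,
      ← Real.rpow_neg hs, hin, indicator_of_mem (mem_Ioo.2 ⟨by linarith, by linarith⟩),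
      indicator_of_mem (mem_Ioo.2 ⟨h1, hlt⟩)]
    ring
  · rw [hypCurve_collapseCurve_of_three_le hgt'.le, U_smul m h0, hin,
      indicator_of_notMem fun h => by linarith [h.2],
      indicator_of_notMem fun h => by linarith [h.2]]
    ring

lemma integrableOn_potentialGap_collapseCurve (m : Fin N → ℝ) (a x : Conf d N) (T : EReal) :
    IntegrableOn (potentialGap m a x (collapseCurve a x)) (timeSet 1 T) := by
  have hinv : Integrable ((Ioo (1 : ℝ) 3).indicator fun s => s⁻¹) := by
    refine (integrable_indicator_iff measurableSet_Ioo).2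
      (IntegrableOn.mono_set ?_ Ioo_subset_Icc_self)
    exact (continuousOn_inv₀.mono fun t ht => (one_pos.trans_le ht.1).ne').integrableOn_Icc
  have hpow := integrable_indicator_Ioo_rpow
  have hsum := (((hpow.comp_sub_left 2).mul_const (U m x)).add
    ((hpow.comp_sub_right 2).mul_const (U m a / 3))).sub (hinv.mul_const (U m a))
  refine hsum.integrableOn.congr_fun_ae ?_
  filter_upwards [ae_restrict_mem (measurableSet_timeSet 1 T),
    Measure.ae_ne (volume.restrict (timeSet 1 T)) 2,
    Measure.ae_ne (volume.restrict (timeSet 1 T)) 3] with t ht h2 h3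
  exact (potentialGap_collapseCurve m a x ht.1 h2 h3).symm

lemma hypInf_ne_top (hm : ∀ i, 0 ≤ m i) (ha : inOmega m a) (hx : inOmega m x) (T : EReal) :
    hypInf m a x T ≠ ⊤ := by
  have hadm : IsAdmissible m a x T (collapseCurve a x) (collapseCurveDeriv a x) := by
    refine ⟨inD_collapseCurve hm ha.1 hx.1 T, integrableOn_potentialGap_collapseCurve m a x T, ?_⟩
    filter_upwards [ae_restrict_mem (measurableSet_timeSet 1 T),
      Measure.ae_ne (volume.restrict (timeSet 1 T)) 2] with t ht h2
    exact not_collision_hypCurve_collapseCurve ha.2 hx.2 ht.1 h2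
  exact ne_top_of_le_ne_top (EReal.coe_ne_top _) hadm.hypInf_le

end ParabolicCollapse


section LocalTransfer

variable {m : Fin N → ℝ} {a x : Conf d N}

lemma exists_separatedBy_hypCurve (hm : ∀ i, 0 < m i) (a : Conf d N) {s : ℝ} (hs : 0 < s)
    (hx : SeparatedBy s x) (R : ℝ) :
    ∃ δ > 0, ∀ (T : EReal) (y : Conf d N) (φ φ' : ℝ → Conf d N), InD m 1 T φ φ' →
      Dnorm m 1 T φ' ≤ R → ‖y - x‖ ≤ s / 8 →
        ∀ t ∈ timeSet 1 T, t ≤ 1 + δ → SeparatedBy (s / 2) (hypCurve a y φ t) := by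
  obtain ⟨C, hC0, hC⟩ := exists_norm_le_sqrt_mul_Dnorm (d := d) hm
  have hsmall : ∀ᶠ δ in 𝓝[>] (0 : ℝ), C * (√δ * R) + δ * ‖a‖ < s / 8 := by
    refine nhdsWithin_le_nhds (ContinuousAt.eventually_lt (by fun_prop) continuousAt_const ?_)
    simpa using hs
  obtain ⟨δ, hδs, hδ⟩ := (hsmall.and eventually_mem_nhdsWithin).exists
  refine ⟨δ, hδ, fun T y φ φ' h hR hy t ht htδ => ?_⟩
  have hφ : ‖φ t‖ ≤ C * (√δ * R) := (hC 1 T φ φ' h t ht).trans <|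
    mul_le_mul_of_nonneg_left (mul_le_mul (Real.sqrt_le_sqrt (by linarith)) hR Dnorm_nonneg
      (Real.sqrt_nonneg _)) hC0
  have hdrift : ‖(t - 1) • a‖ ≤ δ * ‖a‖ := by
    rw [norm_smul, Real.norm_of_nonneg (sub_nonneg.2 ht.1.le)]
    exact mul_le_mul_of_nonneg_right (by linarith) (norm_nonneg a)
  have hdist : ‖x - hypCurve a y φ t‖ ≤ s / 4 := by
    rw [norm_sub_rev, show hypCurve a y φ t - x = φ t + (t - 1) • a + (y - x) by
      rw [hypCurve, sub_smul, one_smul]; abel]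
    linarith [norm_add₃_le (a := φ t) (b := (t - 1) • a) (c := y - x)]
  have h2 := hx.of_norm_sub_le hdist
  rwa [show s - 2 * (s / 4) = s / 2 by ring] at h2

lemma exists_hypInf_le_add_mul_norm (hm : ∀ i, 0 < m i) (ha : ¬ collision a) (hx : ¬ collision x)
    (T : EReal) (M : ℝ) :
    ∃ L, ∃ η > 0, ∀ y z : Conf d N, inX m y → inX m z → ‖y - x‖ ≤ η → ‖z - x‖ ≤ η →
      ∀ c ≤ M, hypInf m a y T < (c : EReal) →
        hypInf m a z T ≤ ((c + L * ‖y - z‖ : ℝ) : EReal) := by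
  obtain ⟨s, hs, hxs⟩ := exists_separatedBy hx
  obtain ⟨R, hR⟩ := exists_Dnorm_le_of_finiteAction_le hm ha M (s / 16 + ‖x - a‖)
  obtain ⟨δ, hδ, hsep⟩ := exists_separatedBy_hypCurve hm a hs hxs R
  have hm0 (i : Fin N) : 0 ≤ m i := (hm i).le
  set B := ‖(massScaling m : Conf d N →L[ℝ] _)‖
  refine ⟨R * (B / √δ) + B ^ 2 * (s / 2 / 4) / (2 * δ) +
    δ * (2 * pairMass m / (s / 2 / 2) ^ 2), s / 16, by positivity,
    fun y z hy hz hyx hzx c hcM hlt => ?_⟩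
  obtain ⟨φ, φ', hadm, hact⟩ := exists_isAdmissible_of_hypInf_lt hlt
  rw [EReal.coe_lt_coe_iff] at hact
  have hya : ‖y - a‖ ≤ s / 16 + ‖x - a‖ := by
    linarith [norm_sub_le_norm_sub_add_norm_sub y x a]
  have hyz : ‖y - z‖ ≤ s / 8 := by
    linarith [norm_sub_le_norm_sub_add_norm_sub y x z, norm_sub_rev x z]
  have hD := hR T y φ φ' hadm hya (hact.le.trans hcM)
  have hsepφ := hsep T y φ φ' hadm.inD hD (by linarith)
  have hhalf : 0 < s / 2 := half_pos hs
  exact (hadm.add_ramp hm0 hhalf hδ hy hz (by linarith) hsepφ).hypInf_le.trans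
    (EReal.coe_le_coe_iff.2 ((finiteAction_add_ramp_le_add_mul_norm hm0 hadm hhalf hδ hy hz
      (by linarith) hsepφ hD (mnorm_le_opNorm_mul_norm hm0 _)).trans (by gcongr)))

lemma exists_toReal_hypInf_le_add_mul_norm (hm : ∀ i, 0 < m i) (ha : inOmega m a)
    (hx : ¬ collision x) (T : EReal) (M : ℝ) :
    ∃ L, ∃ η > 0, ∀ y z : Conf d N, inOmega m y → inOmega m z → ‖y - x‖ ≤ η → ‖z - x‖ ≤ η →
      (hypInf m a y T).toReal < M →
        (hypInf m a z T).toReal ≤ (hypInf m a y T).toReal + L * ‖y - z‖ := by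
  obtain ⟨L, η, hη, hL⟩ := exists_hypInf_le_add_mul_norm hm ha.2 hx T M
  have hcoe (y : Conf d N) (hy : inOmega m y) :
      ((hypInf m a y T).toReal : EReal) = hypInf m a y T :=
    EReal.coe_toReal (hypInf_ne_top (fun i => (hm i).le) ha hy T) (hypInf_ne_bot hm ha.2 y T)
  refine ⟨L, η, hη, fun y z hy hz hyx hzx hyM => ?_⟩
  by_contra! hlt
  obtain ⟨c, hyc, hc⟩ := exists_between (lt_min hyM (lt_sub_iff_add_lt.2 hlt))
  have hzc := hL y z hy.1 hz.1 hyx hzx c (hc.le.trans (min_le_left _ _))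
    (hcoe y hy ▸ EReal.coe_lt_coe_iff.2 hyc)
  rw [← hcoe z hz, EReal.coe_le_coe_iff] at hzc
  linarith [hc.trans_le (min_le_right _ _)]

end LocalTransfer

theorem w_infty_continuous_general {m : Fin N → ℝ} (hm : ∀ i, 0 < m i) {a : Conf d N}
    (ha : inOmega m a) (T : EReal) :
    (∀ x : Conf d N, inOmega m x → hypInf m a x T ≠ ⊤ ∧ hypInf m a x T ≠ ⊥) ∧
    LocallyLipschitzOn {x | inOmega m x} fun x : Conf d N => (hypInf m a x T).toReal := by
  refine ⟨fun x hx => ⟨hypInf_ne_top (fun i => (hm i).le) ha hx T, hypInf_ne_bot hm ha.2 x T⟩,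
    locallyLipschitzOn_of_eventually_le_add_mul_dist fun x hx M => ?_⟩
  obtain ⟨L, η, hη, hL⟩ := exists_toReal_hypInf_le_add_mul_norm hm ha hx.2 T M
  refine ⟨L, {y | inOmega m y} ∩ Metric.closedBall x η,
    inter_mem_nhdsWithin _ (Metric.closedBall_mem_nhds x hη), fun y hy z hz => ?_⟩
  rw [dist_eq_norm]
  exact hL y z hy.1 hz.1 (mem_closedBall_iff_norm.1 hy.2) (mem_closedBall_iff_norm.1 hz.2)

/-- **Continuity of the minimal renormalized action** : the function
`w_∞(x) = inf_{φ ∈ D₀^{1,2}(1,+∞)} A_x(φ)` is real-valued (finite) on `Ω` and continuous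
on `Ω`. -/
theorem w_infty_continuous {d N : ℕ} (hd : 2 ≤ d) (hN : 2 ≤ N)
    (m : Fin N → ℝ) (hm : ∀ i, 0 < m i)
    (a : Conf d N) (ha : inOmega m a) :
    (∀ x : Conf d N, inOmega m x → hypInf m a x ⊤ ≠ ⊤ ∧ hypInf m a x ⊤ ≠ ⊥) ∧
    ContinuousOn (fun x : Conf d N => (hypInf m a x ⊤).toReal) {x | inOmega m x} := by
  exact (w_infty_continuous_general hm ha ⊤).imp_right LocallyLipschitzOn.continuousOn

end NBodyHJ
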